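/- For t > 0, α > 0 and y ≥ 1 define E_t(y;α) = θ₃(t²α)·θ₃(yα)·θ₃(α/y) + θ₂(t²α)·θ₂(yα)·θ₂(α/y). Then for every t with 0 < t < √2 there exists α_t > 0 such that for every α > α_t, y = 1 is not a minimizer of y ↦ E_t(y;α) on [1,+∞); that is, there exists y > 1 with E_t(y;α) < E_t(1;α). In particular (taking t = 1) there exists α₁ such that for α > α₁ the BCC lattice is not a minimizer of θ among the body-centred-orthorhombic lattices L_{y,1}, y ≥ 1. -/

import Mathlib

/-!
For large `α` the energy is governed by the short vectors of the lattice. At `y = 1` the layers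
at height `t/2` contain vectors of squared length `(2 + t²)/4`, and `t < √2` says exactly that
this is smaller than `1`. Fix any `y` with `1 < y < 4/(2 + t²)`. Passing from `1` to `y`

* lengthens the shortest vectors of the odd layers, since `y + 1/y > 2`, so that the `θ₂`-part
  of the energy drops by at least half of `e^{-πα(2+t²)/4}` (`Et_lt_Et_one`);
* raises the `θ₃`-part by at most a constant times `e^{-πα/y}`, which is of smaller order
  because `1/y > (2 + t²)/4`.

The only analytic input is the pair of crude bounds `1 ≤ θ₃(x) ≤ 1 + C e^{-πx}` and
`e^{-πx/4} ≤ θ₂(x) ≤ C e^{-πx/4}` for `x ≥ 1`.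
-/

open scoped BigOperators

/-- The classical Jacobi theta function `θ₂(x) = Σ_{k∈ℤ} e^{−π(k+1/2)²x}`. -/
noncomputable def theta2 (x : ℝ) : ℝ :=
  ∑' n : ℤ, Real.exp (-Real.pi * ((n : ℝ) + 1 / 2) ^ 2 * x)

/-- The classical Jacobi theta function `θ₃(x) = Σ_{k∈ℤ} e^{−πk²x}`. -/
noncomputable def theta3 (x : ℝ) : ℝ :=
  ∑' n : ℤ, Real.exp (-Real.pi * (n : ℝ) ^ 2 * x)

/-- The theta function `E_t(y;α) = θ_{L_{y,t}}(α)` of the body-centred-orthorhombic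
lattice `L_{y,t}`. -/
noncomputable def Et (t α y : ℝ) : ℝ :=
  theta3 (t ^ 2 * α) * theta3 (y * α) * theta3 (α / y)
    + theta2 (t ^ 2 * α) * theta2 (y * α) * theta2 (α / y)

lemma summable_theta3 {x : ℝ} (hx : 0 < x) :
    Summable fun n : ℤ => Real.exp (-Real.pi * (n : ℝ) ^ 2 * x) := by
  refine (summable_pow_mul_jacobiTheta₂_term_bound 0 hx 0).congr fun n => ?_
  rw [pow_zero, one_mul]
  congr 1
  ring

lemma summable_theta2 {x : ℝ} (hx : 0 < x) :
    Summable fun n : ℤ => Real.exp (-Real.pi * ((n : ℝ) + 1 / 2) ^ 2 * x) := by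
  refine Summable.of_nonneg_of_le (fun n => (Real.exp_pos _).le) (fun n => ?_)
    ((summable_theta3 (half_pos hx)).mul_left (Real.exp (Real.pi * x / 4)))
  rw [← Real.exp_add, Real.exp_le_exp]
  -- `(n + 1/2)² + 1/4 = n²/2 + (n + 1)²/2`
  have h : 0 ≤ Real.pi * x * ((n : ℝ) + 1) ^ 2 := by positivity
  linarith

lemma one_le_theta3 {x : ℝ} (hx : 0 < x) : 1 ≤ theta3 x := by
  have h := (summable_theta3 hx).le_tsum 0 (fun n _ => (Real.exp_pos _).le)
  simpa [theta3] using h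

lemma exp_le_theta2 {x : ℝ} (hx : 0 < x) : Real.exp (-Real.pi * x / 4) ≤ theta2 x := by
  have h := (summable_theta2 hx).le_tsum 0 (fun n _ => (Real.exp_pos _).le)
  refine le_trans (le_of_eq ?_) h
  congr 1
  push_cast
  ring

/-- For `n ≠ 0` and `x ≥ 1` one has `n² x ≥ n² + x - 1`, so the nonzero terms are dominated by
`e^{-π(x-1)}` times those of `θ₃(1)`. -/
lemma theta3_le {x : ℝ} (hx : 1 ≤ x) :
    theta3 x ≤ 1 + Real.exp Real.pi * theta3 1 * Real.exp (-Real.pi * x) := by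
  have hx0 : 0 < x := by linarith
  have hs := (summable_theta3 one_pos).mul_left (Real.exp Real.pi * Real.exp (-Real.pi * x))
  have h1 : HasSum (fun n : ℤ => if n = 0 then (1 : ℝ) else 0) 1 := hasSum_ite_eq 0 1
  have hle := (summable_theta3 hx0).tsum_le_tsum (g := fun n : ℤ =>
    (if n = 0 then (1 : ℝ) else 0) + Real.exp Real.pi * Real.exp (-Real.pi * x) *
      Real.exp (-Real.pi * (n : ℝ) ^ 2 * 1)) (fun n => ?_) (h1.summable.add hs)
  · rw [h1.summable.tsum_add hs, h1.tsum_eq, tsum_mul_left] at hle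
    unfold theta3
    linarith
  · by_cases hn : n = 0
    · subst hn
      simp only [Int.cast_zero, if_true]
      have : 0 < Real.exp Real.pi * Real.exp (-Real.pi * x) *
        Real.exp (-Real.pi * (0 : ℝ) ^ 2 * 1) := by positivity
      simpa using this.le
    · simp only [if_neg hn, zero_add]
      rw [← Real.exp_add, ← Real.exp_add, Real.exp_le_exp]
      have hn1 : (1 : ℝ) ≤ (n : ℝ) ^ 2 := by
        have : (1 : ℤ) ≤ n ^ 2 := by
          have : 0 < n ^ 2 := by positivity
          omega
        exact_mod_cast this
      have := mul_nonneg Real.pi_pos.le (mul_nonneg (sub_nonneg.2 hn1) (sub_nonneg.2 hx))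
      nlinarith

lemma theta2_le {x : ℝ} (hx : 1 ≤ x) :
    theta2 x ≤ Real.exp (Real.pi / 4) * theta2 1 * Real.exp (-Real.pi * x / 4) := by
  have hx0 : 0 < x := by linarith
  have hs := (summable_theta2 one_pos).mul_left
    (Real.exp (Real.pi / 4) * Real.exp (-Real.pi * x / 4))
  have hle := (summable_theta2 hx0).tsum_le_tsum (fun n => ?_) hs
  · rw [tsum_mul_left] at hle
    unfold theta2
    linarith
  · rw [← Real.exp_add, ← Real.exp_add, Real.exp_le_exp]
    -- `(n + 1/2)² - 1/4 = n(n + 1)` is nonnegative on the integers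
    have hn1 : (0 : ℝ) ≤ (n : ℝ) * (n + 1) := by
      have : (0 : ℤ) ≤ n * (n + 1) := by
        rcases le_or_gt 0 n with h | h
        · positivity
        · nlinarith
      exact_mod_cast this
    have := mul_nonneg Real.pi_pos.le (mul_nonneg hn1 (sub_nonneg.2 hx))
    nlinarith

/-- The energy comparison from two bounds: `A` bounds the gain of the `θ₃`-part over its value at
`y = 1` (where `θ₃(α)² ≥ 1`), and `B` bounds the `y`-dependent factor of the `θ₂`-part. -/
lemma Et_lt_Et_one {t α y A B : ℝ} (ht : 0 < t) (hα : 0 < α)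
    (hA : theta3 (t ^ 2 * α) * (theta3 (y * α) * theta3 (α / y) - 1) ≤ A)
    (hB : theta2 (y * α) * theta2 (α / y) ≤ B)
    (hB' : B < Real.exp (-Real.pi * α / 2) / 2)
    (hAB : A < Real.exp (-Real.pi * α * ((2 + t ^ 2) / 4)) / 2) :
    Et t α y < Et t α 1 := by
  have h3 := one_le_theta3 hα
  have h3t := one_le_theta3 (show 0 < t ^ 2 * α by positivity)
  have h2 := exp_le_theta2 hα
  have h2t := exp_le_theta2 (show 0 < t ^ 2 * α by positivity)
  have e1 : Real.exp (-Real.pi * α / 2)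
      = Real.exp (-Real.pi * α / 4) * Real.exp (-Real.pi * α / 4) := by
    rw [← Real.exp_add]; ring_nf
  have e2 : Real.exp (-Real.pi * α * ((2 + t ^ 2) / 4))
      = Real.exp (-Real.pi * (t ^ 2 * α) / 4) * Real.exp (-Real.pi * α / 2) := by
    rw [← Real.exp_add]; ring_nf
  have h22 : Real.exp (-Real.pi * α / 2) ≤ theta2 α * theta2 α := by
    rw [e1]
    exact mul_le_mul h2 h2 (Real.exp_pos _).le ((Real.exp_pos _).le.trans h2)
  have h33 : 1 ≤ theta3 α * theta3 α := one_le_mul_of_one_le_of_one_le h3 h3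
  have hp := Real.exp_pos (-Real.pi * α / 2)
  have hpt := Real.exp_pos (-Real.pi * (t ^ 2 * α) / 4)
  -- the drop of the `θ₂`-part
  have k2 : Real.exp (-Real.pi * (t ^ 2 * α) / 4) * (Real.exp (-Real.pi * α / 2) / 2)
      ≤ theta2 (t ^ 2 * α) * (theta2 α * theta2 α - theta2 (y * α) * theta2 (α / y)) :=
    mul_le_mul h2t (by linarith) (by positivity) (hpt.le.trans h2t)
  have k3 : theta3 (t ^ 2 * α) * 1 ≤ theta3 (t ^ 2 * α) * (theta3 α * theta3 α) :=
    mul_le_mul_of_nonneg_left h33 (by linarith)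
  rw [e2] at hAB
  simp only [Et, one_mul, div_one]
  nlinarith

lemma mul_sub_one_le {a b C u : ℝ} (hC : 0 ≤ C) (hu : 0 ≤ u) (hu1 : u ≤ 1) (hb : 0 ≤ b)
    (ha : a ≤ 1 + C * u) (hb' : b ≤ 1 + C * u) : a * b - 1 ≤ (2 * C + C * C) * u := by
  have m := mul_le_mul ha hb' hb (by positivity)
  have h : C * C * (u * u) ≤ C * C * u :=
    mul_le_mul_of_nonneg_left (mul_le_of_le_one_left hu hu1) (by positivity)
  linarith

/-- A decaying exponential `e^{-πcα}` beats any constant. -/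
lemma eventually_const_mul_exp_lt (K : ℝ) {c : ℝ} (hc : 0 < c) :
    ∀ᶠ α : ℝ in Filter.atTop, K * Real.exp (-(Real.pi * c * α)) < 1 / 2 := by
  have h : Filter.Tendsto (fun α : ℝ => K * Real.exp (-(Real.pi * c * α)))
      Filter.atTop (nhds (K * 0)) :=
    (Real.tendsto_exp_neg_atTop_nhds_zero.comp
      (Filter.tendsto_id.const_mul_atTop (mul_pos Real.pi_pos hc))).const_mul K
  rw [mul_zero] at h
  exact h.eventually (gt_mem_nhds (by norm_num))

/-- for every `0 < t < √2` there is `α_t > 0` such that for all `α > α_t`,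
`y = 1` is not a minimizer of `y ↦ E_t(y;α)` on `[1,∞)`: some `y > 1` has strictly smaller
energy.  In particular (`t = 1`) the BCC lattice is not a minimizer among the
body-centred-orthorhombic lattices `L_{y,1}` for large `α`. -/
theorem one_not_minimizer_for_large_alpha (t : ℝ) (ht : 0 < t) (ht2 : t < Real.sqrt 2) :
    ∃ αt : ℝ, 0 < αt ∧ ∀ α : ℝ, αt < α →
      ∃ y : ℝ, 1 < y ∧ Et t α y < Et t α 1 := by
  have ht4 : t ^ 2 < 2 := by
    have := Real.sq_sqrt (show (0 : ℝ) ≤ 2 by norm_num)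
    nlinarith [Real.sqrt_nonneg 2]
  obtain ⟨y, hy, hy2⟩ : ∃ y : ℝ, 1 < y ∧ y < 4 / (2 + t ^ 2) :=
    exists_between (by rw [lt_div_iff₀ (by positivity)]; linarith)
  have hy0 : 0 < y := by linarith
  have hc1 : 0 < 1 / y - (2 + t ^ 2) / 4 := by
    rw [lt_div_iff₀ (by positivity)] at hy2
    rw [sub_pos, lt_div_iff₀ hy0]
    linarith
  have hc2 : 0 < (y + 1 / y - 2) / 4 := by
    have : y + 1 / y - 2 = (y - 1) ^ 2 / y := by field_simp; ring
    rw [this]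
    have : 0 < y - 1 := by linarith
    positivity
  obtain ⟨C, hC⟩ : ∃ C, C = Real.exp Real.pi * theta3 1 := ⟨_, rfl⟩
  obtain ⟨D, hD⟩ : ∃ D, D = Real.exp (Real.pi / 4) * theta2 1 := ⟨_, rfl⟩
  have hC0 : 0 ≤ C := by
    have := one_le_theta3 one_pos
    rw [hC]; positivity
  have hD0 : 0 ≤ D := by
    have := (Real.exp_pos _).le.trans (exp_le_theta2 one_pos)
    rw [hD]; positivity
  have hev : ∀ᶠ α : ℝ in Filter.atTop, Et t α y < Et t α 1 := by
    filter_upwards [Filter.eventually_ge_atTop 1, Filter.eventually_ge_atTop (1 / t ^ 2),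
      Filter.eventually_ge_atTop y,
      eventually_const_mul_exp_lt ((1 + C) * (2 * C + C * C)) hc1,
      eventually_const_mul_exp_lt (D * D) hc2] with α h1 h2 h3 h4 h5
    have hα : 0 < α := by linarith
    have hya : 1 ≤ α / y := by rw [le_div_iff₀ hy0]; linarith
    have hya' : α / y ≤ y * α := by
      rw [div_le_iff₀ hy0]
      nlinarith [mul_pos hα hy0, mul_pos (mul_pos hα hy0) (sub_pos.2 hy)]
    have hta : 1 ≤ t ^ 2 * α := by
      rw [div_le_iff₀ (by positivity)] at h2
      linarith
    have b1 := theta3_le hta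
    have b2 := theta3_le (hya.trans hya')
    have b3 := theta3_le hya
    have b4 := theta2_le (hya.trans hya')
    have b5 := theta2_le hya
    rw [← hC] at b1 b2 b3
    rw [← hD] at b4 b5
    have g1 := one_le_theta3 (show 0 < t ^ 2 * α by linarith)
    have g2 := one_le_theta3 (show 0 < y * α by linarith)
    have g3 := one_le_theta3 (show 0 < α / y by linarith)
    have g5 := (Real.exp_pos _).le.trans (exp_le_theta2 (show 0 < α / y by linarith))
    have expmono : Real.exp (-Real.pi * (y * α)) ≤ Real.exp (-Real.pi * (α / y)) := by
      rw [Real.exp_le_exp]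
      nlinarith [Real.pi_pos]
    have le1 : ∀ x : ℝ, 1 ≤ x → Real.exp (-Real.pi * x) ≤ 1 := fun x hx => by
      rw [Real.exp_le_one_iff]
      nlinarith [Real.pi_pos]
    have l1 := le1 _ hta
    have l3 := le1 _ hya
    have p3 := Real.exp_pos (-Real.pi * (α / y))
    have e1 : Real.exp (-Real.pi * (α / y)) = Real.exp (-Real.pi * α * ((2 + t ^ 2) / 4)) *
        Real.exp (-(Real.pi * (1 / y - (2 + t ^ 2) / 4) * α)) := by
      rw [← Real.exp_add]; ring_nf
    have e2 : Real.exp (-Real.pi * (y * α) / 4) * Real.exp (-Real.pi * (α / y) / 4)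
        = Real.exp (-Real.pi * α / 2) *
          Real.exp (-(Real.pi * ((y + 1 / y - 2) / 4) * α)) := by
      rw [← Real.exp_add, ← Real.exp_add]; ring_nf
    refine Et_lt_Et_one (A := (1 + C) * ((2 * C + C * C) * Real.exp (-Real.pi * (α / y))))
      (B := (D * Real.exp (-Real.pi * (y * α) / 4)) * (D * Real.exp (-Real.pi * (α / y) / 4)))
      ht hα ?_ ?_ ?_ ?_
    · refine mul_le_mul ?_ ?_ ?_ (by linarith)
      · linarith [mul_le_mul_of_nonneg_left l1 hC0]
      · exact mul_sub_one_le hC0 p3.le l3 (by linarith)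
          (b2.trans (by linarith [mul_le_mul_of_nonneg_left expmono hC0])) b3
      · exact sub_nonneg.2 (one_le_mul_of_one_le_of_one_le g2 g3)
    · exact mul_le_mul b4 b5 g5 (by positivity)
    · have := mul_lt_mul_of_pos_left h5 (Real.exp_pos (-Real.pi * α / 2))
      calc _ = D * D * (Real.exp (-Real.pi * (y * α) / 4) *
            Real.exp (-Real.pi * (α / y) / 4)) := by ring
        _ < _ := by rw [e2]; linarith
    · have := mul_lt_mul_of_pos_left h4 (Real.exp_pos (-Real.pi * α * ((2 + t ^ 2) / 4)))
      rw [e1]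
      linarith
  obtain ⟨a, ha⟩ := Filter.eventually_atTop.1 hev
  exact ⟨max a 1, by positivity, fun α hα => ⟨y, hy, ha α ((le_max_left a 1).trans hα.le)⟩⟩
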